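/- arXiv:1504.08352 — 3 statements merged into one kernel-verified Lean document; each statement's English description precedes it below -/
import Mathlib

section
/- Let A be a finite alphabet with |A| ≥ 2, let ε₀ > 0 be a constant and ε₁ a constant with ε₁ ≥ 5ε₀. Set ρ = ⌈√n · log log n⌉, k = C(n,ρ), N = C(n,ρ)·|A|^ρ, and k' = k·N^{−ε₀/log log N}. Then for all sufficiently large n: log₂ k' ≥ max{ log₂ k, n·H(ρ/n) } − ε₁·log₂ k / log₂ n. -/
/-!
Write `L = log₂ k`, `M = log₂ N = L + ρ log₂ |A|`. Then `log₂ k' = L - ε₀ M / log₂ M`.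

Once `|A| ρ ≤ n` one has `C(n,ρ) ≥ |A| ^ ρ` (`pow_le_choose_of_mul_le`), so `L ≥ ρ log₂ |A|`,
hence `M ≤ 2 L` and `M ≥ L ≥ ρ ≥ √n`. Consequently `log₂ M ≥ (log₂ n) / 2`, and the loss
`ε₀ M / log₂ M` is at most `4 ε₀ L / log₂ n`.

It remains to absorb `n H(ρ/n) - L`, which is at most `log₂ (n + 1)` (`mul_binEnt_le`): in the
expansion of `(ρ + (n - ρ)) ^ n` the term of index `ρ` is the largest of the `n + 1` terms.
Since `L ≥ √n` eventually dominates `(log₂ n) ^ 2`, this is at most `ε₀ L / log₂ n`, and the total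
loss is at most `5 ε₀ L / log₂ n`.
-/

open Classical Finset

noncomputable section

/-- Binary entropy function (base 2). -/
def binEnt (p : ℝ) : ℝ := -(p * Real.logb 2 p) - (1 - p) * Real.logb 2 (1 - p)

/-- Entropy (base 2) of the random variable `f` under the uniform distribution on `S`. -/
def fEnt {V B : Type*} [Fintype B] (S : Finset V) (f : V → B) : ℝ :=
  ∑ b : B,
    -((((S.filter fun v => f v = b).card : ℝ) / (S.card : ℝ)) *
      Real.logb 2 (((S.filter fun v => f v = b).card : ℝ) / (S.card : ℝ)))

/-- Conditional entropy `H(f | g)` under the uniform distribution on `S`. -/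
def cEnt {V B C : Type*} [Fintype B] [Fintype C] (S : Finset V) (f : V → B) (g : V → C) : ℝ :=
  ∑ c : C, (((S.filter fun v => g v = c).card : ℝ) / (S.card : ℝ)) *
      fEnt (S.filter fun v => g v = c) f

/-- Probability of the event `P` under the uniform distribution on `S`. -/
def prS {V : Type*} (S : Finset V) (P : V → Prop) : ℝ :=
  ((S.filter P).card : ℝ) / (S.card : ℝ)

/-- A 2CSP instance on `n` variables over alphabet `A`: an undirected constraint graph
together with a relation on each constraint edge. -/
structure CSP (n : ℕ) (A : Type*) where
  adj : Fin n → Fin n → Prop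
  symm : ∀ {i j}, adj i j → adj j i
  irrefl : ∀ i, ¬ adj i i
  rel : Fin n → Fin n → A → A → Prop
  rel_symm : ∀ i j a b, rel i j a b ↔ rel j i b a

/-- ρ = ⌈√n · log log n⌉. -/
def rho (n : ℕ) : ℕ := ⌈Real.sqrt n * Real.logb 2 (Real.logb 2 n)⌉₊

/-- k = C(n, ρ). -/
def kk (n : ℕ) : ℕ := n.choose (rho n)

/-- N = C(n,ρ)·|A|^ρ, the number of vertices of the product graph. -/
def NN (n a : ℕ) : ℕ := n.choose (rho n) * a ^ (rho n)

/-- k' = k · N^(−ε₀ / log log N). -/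
def kprime (n a : ℕ) (ε₀ : ℝ) : ℝ :=
  (kk n : ℝ) * (NN n a : ℝ) ^ (-(ε₀ / Real.logb 2 (Real.logb 2 (NN n a))))

/-- Vertices of the product graph: pairs (T, y) with T ⊆ {1,…,n}, |T| = ρ, y : T → A. -/
abbrev Vtx (n ρ : ℕ) (A : Type*) := Σ T : {T : Finset (Fin n) // T.card = ρ}, (↥T.1 → A)

variable {n ρ : ℕ} {A : Type*} [Fintype A] [DecidableEq A]

/-- X_i : indicator of the event that variable i is chosen by vertex v. -/
def Xb (v : Vtx n ρ A) (i : Fin n) : Bool := decide (i ∈ v.1.1)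

/-- Y_i : value of vertex v on variable i (default a₀ if i is not chosen). -/
def Yv (a₀ : A) (v : Vtx n ρ A) (i : Fin n) : A :=
  if h : i ∈ v.1.1 then v.2 ⟨i, h⟩ else a₀

/-- Type of prefix values: (X₁,…,X_{i},Y₁,…,Y_{i}) padded with defaults. -/
abbrev Pfx (n : ℕ) (A : Type*) := (Fin n → Bool) × (Fin n → A)

/-- W_{i-1} : the prefix of v consisting of (X_j, Y_j) for j < i (0-indexed cutoff i). -/
def Wp (a₀ : A) (i : ℕ) (v : Vtx n ρ A) : Pfx n A :=
  (fun j => if (j : ℕ) < i then Xb v j else false,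
   fun j => if (j : ℕ) < i then Yv a₀ v j else a₀)

/-- q_i = Pr[X_i = 1]. -/
def qi (S : Finset (Vtx n ρ A)) (i : Fin n) : ℝ := prS S (fun v => Xb v i = true)

/-- Pr[w_{i-1}] : probability of the prefix value w. -/
def prW (a₀ : A) (S : Finset (Vtx n ρ A)) (i : ℕ) (w : Pfx n A) : ℝ :=
  prS S (fun v => Wp a₀ i v = w)

/-- q_i(w_{i-1}) = Pr[X_i = 1 | W_{i-1} = w]. -/
def qiW (a₀ : A) (S : Finset (Vtx n ρ A)) (i : Fin n) (w : Pfx n A) : ℝ :=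
  prS (S.filter fun v => Wp a₀ (i : ℕ) v = w) (fun v => Xb v i = true)

/-- α_i = H(X_i | W_{i-1}). -/
def alphaE (a₀ : A) (S : Finset (Vtx n ρ A)) (i : Fin n) : ℝ :=
  cEnt S (fun v => Xb v i) (Wp a₀ (i : ℕ))

/-- β_i = H(Y_i | W_{i-1}, X_i). -/
def betaE (a₀ : A) (S : Finset (Vtx n ρ A)) (i : Fin n) : ℝ :=
  cEnt S (fun v => Yv a₀ v i) (fun v => (Wp a₀ (i : ℕ) v, Xb v i))

/-- β_i(w_{i-1}) = H(Y_i | X_i, W_{i-1} = w). -/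
def betaW (a₀ : A) (S : Finset (Vtx n ρ A)) (i : Fin n) (w : Pfx n A) : ℝ :=
  cEnt (S.filter fun v => Wp a₀ (i : ℕ) v = w) (fun v => Yv a₀ v i) (fun v => Xb v i)

/-- A good index: α_i ≥ H(q_i) − 2q_i·log|A| and β_i ≥ (1/2)ε₁q_i. -/
def GoodIdx (a₀ : A) (S : Finset (Vtx n ρ A)) (ε₁ : ℝ) (i : Fin n) : Prop :=
  alphaE a₀ S i ≥ binEnt (qi S i) - 2 * qi S i * Real.logb 2 (Fintype.card A) ∧
  betaE a₀ S i ≥ (1 / 2) * ε₁ * qi S i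

/-- Neighborhood relation of the i-th prefix graph (self-loops included): two prefixes are
neighbors iff wherever both choose a variable j < i they assign it the same label. -/
def PfxNbr (n : ℕ) (A : Type*) (i : ℕ) (w σ' : Pfx n A) : Prop :=
  ∀ j : Fin n, (j : ℕ) < i → w.1 j = true → σ'.1 j = true → w.2 j = σ'.2 j

/-- A good prefix. -/
def GoodPfx (a₀ : A) (S : Finset (Vtx n ρ A)) (ε₁ ε₂ ε₃ : ℝ) (i : Fin n) (w : Pfx n A) : Prop :=
  GoodIdx a₀ S ε₁ i ∧
  (∑ σ' : Pfx n A, if PfxNbr n A (i : ℕ) w σ' then prW a₀ S (i : ℕ) σ' * qiW a₀ S i σ' else 0)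
      ≥ (1 - ε₂) * qi S i ∧
  betaW a₀ S i w ≥ ε₃ * qiW a₀ S i w

/-- A vertex violating an internal 2CSP constraint (an isolated vertex). -/
def Violates (ψ : CSP n A) (v : Vtx n ρ A) : Prop :=
  ∃ i j, ∃ (hi : i ∈ v.1.1) (hj : j ∈ v.1.1),
    ψ.adj i j ∧ ¬ ψ.rel i j (v.2 ⟨i, hi⟩) (v.2 ⟨j, hj⟩)

/-- Adjacency in the product graph G_ψ: both endpoints are non-isolated, they agree on
common variables, and all cross 2CSP constraints are satisfied. -/
def PAdj (ψ : CSP n A) (u v : Vtx n ρ A) : Prop :=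
  ¬ Violates ψ u ∧ ¬ Violates ψ v ∧
  (∀ i, ∀ (hu : i ∈ u.1.1) (hv : i ∈ v.1.1), u.2 ⟨i, hu⟩ = v.2 ⟨i, hv⟩) ∧
  (∀ i j, ∀ (hu : i ∈ u.1.1) (hv : j ∈ v.1.1), ψ.adj i j → ψ.rel i j (u.2 ⟨i, hu⟩) (v.2 ⟨j, hv⟩))

/-- den(S) : the edge density of S in the product graph. -/
def den (ψ : CSP n A) (S : Finset (Vtx n ρ A)) : ℝ :=
  (((S ×ˢ S).filter fun p => PAdj ψ p.1 p.2).card : ℝ) / ((S.card : ℝ) ^ 2)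

/-- den(G_{i+1}) : weighted density of the prefix graph with cutoff i. -/
def pfxDen (a₀ : A) (S : Finset (Vtx n ρ A)) (i : ℕ) : ℝ :=
  ∑ w : Pfx n A, ∑ σ' : Pfx n A,
    if PfxNbr n A i w σ' then prW a₀ S i w * prW a₀ S i σ' else 0

/-- Number of (ordered) satisfied constraint pairs for assignment τ. -/
def nSat (ψ : CSP n A) (τ : Fin n → A) : ℕ :=
  ((univ ×ˢ univ : Finset (Fin n × Fin n)).filter fun p =>
    ψ.adj p.1 p.2 ∧ ψ.rel p.1 p.2 (τ p.1) (τ p.2)).card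

/-- Number of (ordered) constraint pairs. -/
def nEdg (ψ : CSP n A) : ℕ :=
  ((univ ×ˢ univ : Finset (Fin n × Fin n)).filter fun p => ψ.adj p.1 p.2).card

/-- The constraint graph is d-regular. -/
def Regular (ψ : CSP n A) (d : ℕ) : Prop :=
  ∀ i, ((univ : Finset (Fin n)).filter fun j => ψ.adj i j).card = d

/-- A typical prefix: (1−ε₅)ρ/n < q_i(w) < (1+ε₅)ρ/n. -/
def TypPfx (a₀ : A) (S : Finset (Vtx n ρ A)) (ε₅ : ℝ) (i : Fin n) (w : Pfx n A) : Prop :=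
  (1 - ε₅) * ((ρ : ℝ) / (n : ℝ)) < qiW a₀ S i w ∧ qiW a₀ S i w < (1 + ε₅) * ((ρ : ℝ) / (n : ℝ))

/-- A typical variable: typical prefixes have total probability at least 1−ε₅. -/
def TypVar (a₀ : A) (S : Finset (Vtx n ρ A)) (ε₅ : ℝ) (i : Fin n) : Prop :=
  (∑ w : Pfx n A, if TypPfx a₀ S ε₅ i w then prW a₀ S (i : ℕ) w else 0) ≥ 1 - ε₅

/-- I(u,v) : the number of tests between u and v (ordered pairs (i,j) forming a constraint
edge between typical variables, chosen with typical prefixes by u, v respectively). -/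
def Icnt (ψ : CSP n A) (a₀ : A) (S : Finset (Vtx n ρ A)) (ε₅ : ℝ) (u v : Vtx n ρ A) : ℕ :=
  ((univ ×ˢ univ : Finset (Fin n × Fin n)).filter fun p =>
    ψ.adj p.1 p.2 ∧ TypVar a₀ S ε₅ p.1 ∧ TypVar a₀ S ε₅ p.2 ∧
    Xb u p.1 = true ∧ Xb v p.2 = true ∧
    TypPfx a₀ S ε₅ p.1 (Wp a₀ (p.1 : ℕ) u) ∧ TypPfx a₀ S ε₅ p.2 (Wp a₀ (p.2 : ℕ) v)).card

/-- I^T(i,j) : the number of tests of the constraint (i,j) over pairs of S. -/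
def ITop (a₀ : A) (S : Finset (Vtx n ρ A)) (ε₅ : ℝ) (i j : Fin n) : ℕ :=
  ((S ×ˢ S).filter fun p =>
    Xb p.1 i = true ∧ Xb p.2 j = true ∧
    TypPfx a₀ S ε₅ i (Wp a₀ (i : ℕ) p.1) ∧ TypPfx a₀ S ε₅ j (Wp a₀ (j : ℕ) p.2)).card

/-- E_{u,v}[I(u,v)] for u,v independent uniform on S. -/
def EI (ψ : CSP n A) (a₀ : A) (S : Finset (Vtx n ρ A)) (ε₅ : ℝ) : ℝ :=
  (∑ u ∈ S, ∑ v ∈ S, (Icnt ψ a₀ S ε₅ u v : ℝ)) / ((S.card : ℝ) ^ 2)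

/-- E_{u,v}[I(u,v)²] for u,v independent uniform on S. -/
def EI2 (ψ : CSP n A) (a₀ : A) (S : Finset (Vtx n ρ A)) (ε₅ : ℝ) : ℝ :=
  (∑ u ∈ S, ∑ v ∈ S, (Icnt ψ a₀ S ε₅ u v : ℝ) ^ 2) / ((S.card : ℝ) ^ 2)

end

theorem pow_le_choose_of_mul_le {a : ℕ} (ha : 1 ≤ a) :
    ∀ (r n : ℕ), a * r ≤ n → a ^ r ≤ n.choose r
  | 0, n, _ => by simp
  | r + 1, 0, h => by
    have : 0 < a * (r + 1) := by positivity
    omega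
  | r + 1, n + 1, h => by
    have ih := pow_le_choose_of_mul_le ha r n (by nlinarith)
    have e := Nat.add_one_mul_choose_eq n r
    refine Nat.le_of_mul_le_mul_right (c := r + 1) ?_ (Nat.succ_pos r)
    rw [← e]
    calc a ^ (r + 1) * (r + 1) = (a * (r + 1)) * a ^ r := by ring
      _ ≤ (n + 1) * n.choose r := Nat.mul_le_mul h ih

/-- The binomial weight `C(n,j) r^j s^(n-j)` with `r + s = n`. -/
def binWeight (r s j : ℕ) : ℕ := (r + s).choose j * r ^ j * s ^ (r + s - j)

theorem binWeight_succ {r s j : ℕ} (hj : j < r + s) :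
    binWeight r s (j + 1) * ((j + 1) * s) = binWeight r s j * ((r + s - j) * r) := by
  have e := Nat.choose_succ_right_eq (r + s) j
  have hp : s ^ (r + s - j) = s ^ (r + s - (j + 1)) * s := by
    rw [← pow_succ]; congr 1; omega
  unfold binWeight
  rw [hp]
  calc _ = ((r + s).choose (j + 1) * (j + 1)) * r ^ (j + 1) * s ^ (r + s - (j + 1)) * s := by ring
    _ = _ := by rw [e]; ring

/-- The mode of the binomial distribution with `n = r + s` trials and mean `r` is `r`. -/
theorem binWeight_le {r s j : ℕ} (hs : 0 < s) (hj : j ≤ r + s) :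
    binWeight r s j ≤ binWeight r s r := by
  rcases le_total j r with h | h
  · induction h using Nat.decreasingInduction with
    | self => exact le_rfl
    | of_succ j hlt ih =>
      refine le_trans ?_ (ih (by omega))
      refine Nat.le_of_mul_le_mul_right (c := (j + 1) * s) ?_ (by positivity)
      rw [binWeight_succ (by omega), mul_comm (j + 1) s]
      exact Nat.mul_le_mul le_rfl (Nat.mul_le_mul (by omega) (by omega))
  · induction j, h using Nat.le_induction with
    | base => exact le_rfl
    | succ j hle ih =>
      refine le_trans ?_ (ih (by omega))
      refine Nat.le_of_mul_le_mul_right (c := (j + 1) * s) ?_ (by positivity)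
      rw [binWeight_succ (by omega), mul_comm (j + 1) s]
      exact Nat.mul_le_mul le_rfl (Nat.mul_le_mul (by omega) (by omega))

theorem pow_self_le_binWeight {r s : ℕ} (hs : 0 < s) :
    (r + s) ^ (r + s) ≤ (r + s + 1) * binWeight r s r := by
  rw [add_pow]
  calc ∑ m ∈ range (r + s + 1), r ^ m * s ^ (r + s - m) * (r + s).choose m
      ≤ ∑ m ∈ range (r + s + 1), binWeight r s r := by
        refine Finset.sum_le_sum fun m hm => ?_
        refine le_trans (le_of_eq ?_) (binWeight_le hs (Nat.lt_succ_iff.mp (mem_range.mp hm)))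
        unfold binWeight; ring
    _ = _ := by simp

/-- The entropy bound `2 ^ (n H(r/n)) ≤ (n + 1) C(n,r)`, in logarithmic form. -/
theorem mul_binEnt_le {n r : ℕ} (hr : 0 < r) (hrn : r < n) :
    (n : ℝ) * binEnt ((r : ℝ) / n) ≤ Real.logb 2 (n.choose r) + Real.logb 2 ((n : ℝ) + 1) := by
  obtain ⟨s, rfl⟩ := Nat.exists_eq_add_of_lt hrn
  set t := s + 1 with ht
  have hn : r + s + 1 = r + t := by omega
  rw [hn] at *
  have hr' : (0 : ℝ) < r := by exact_mod_cast hr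
  have ht' : (0 : ℝ) < t := by exact_mod_cast Nat.succ_pos s
  have hc : (0 : ℝ) < (r + t).choose r := by exact_mod_cast Nat.choose_pos (by omega)
  have key : ((r + t : ℝ)) ^ (r + t) ≤
      ((r : ℝ) + t + 1) * ((r + t).choose r * (r : ℝ) ^ r * (t : ℝ) ^ t) := by
    have h := pow_self_le_binWeight (r := r) (s := t) (Nat.succ_pos s)
    unfold binWeight at h
    rw [Nat.add_sub_cancel_left] at h
    exact_mod_cast h
  have key2 := Real.logb_le_logb_of_le (b := 2) (by norm_num) (by positivity) key
  rw [Real.logb_mul (by positivity) (by positivity), Real.logb_mul (by positivity) (by positivity),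
    Real.logb_mul (by positivity) (by positivity), Real.logb_pow, Real.logb_pow,
    Real.logb_pow] at key2
  have h1 : 1 - (r : ℝ) / ((r + t : ℕ) : ℝ) = (t : ℝ) / (r + t) := by
    push_cast; field_simp; ring
  unfold binEnt
  rw [h1]
  push_cast at key2 ⊢
  rw [Real.logb_div (by positivity) (by positivity), Real.logb_div (by positivity) (by positivity)]
  have e : ((r : ℝ) + t) * (-(r / (r + t) * (Real.logb 2 r - Real.logb 2 (r + t))) -
      t / (r + t) * (Real.logb 2 t - Real.logb 2 (r + t))) =
      (r + t) * Real.logb 2 (r + t) - r * Real.logb 2 r - t * Real.logb 2 t := by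
    field_simp; ring
  rw [e]
  linarith

theorem logb_two_le_self {x : ℝ} (hx : 0 < x) : Real.logb 2 x ≤ x := by
  have h2 : 0 < Real.log 2 := Real.log_pos (by norm_num)
  rw [Real.logb, div_le_iff₀ h2]
  -- Applying `log y ≤ y - 1` at `y = x / 2` gives a slope `1 / 2` below `log 2`.
  have h := Real.log_le_sub_one_of_pos (half_pos hx)
  rw [Real.log_div hx.ne' (by norm_num)] at h
  have := Real.log_two_gt_d9
  have := Real.log_two_lt_d9
  nlinarith

theorem eventually_logb_sq_le {δ : ℝ} (hδ : 0 < δ) :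
    ∀ᶠ n : ℕ in Filter.atTop, Real.logb 2 n ^ 2 ≤ δ * Real.sqrt n := by
  have h := (Real.isLittleO_pow_log_id_atTop (n := 2)).bound (c := δ / 16) (by positivity)
  have ht : Filter.Tendsto (fun n : ℕ => Real.sqrt n) Filter.atTop Filter.atTop :=
    Real.tendsto_sqrt_atTop.comp tendsto_natCast_atTop_atTop
  filter_upwards [ht.eventually h] with n hn
  simp only [id, Real.norm_eq_abs, abs_of_nonneg (Real.sqrt_nonneg _), abs_pow, sq_abs] at hn
  rw [Real.log_sqrt (Nat.cast_nonneg n)] at hn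
  have h2 : 0 < Real.log 2 := Real.log_pos (by norm_num)
  have := Real.log_two_gt_d9
  rw [Real.logb, div_pow, div_le_iff₀ (by positivity)]
  have h0 : 0 ≤ δ * Real.sqrt n := by positivity
  have h4 : (1 : ℝ) / 4 ≤ Real.log 2 ^ 2 := by nlinarith
  nlinarith

/-- log₂ k' ≥ max{log₂ k, n·H(ρ/n)} − ε₁·log₂ k / log₂ n for all
sufficiently large n, whenever ε₁ ≥ 5ε₀ > 0. -/
theorem statement_4 (A : Type) [Fintype A] [DecidableEq A] (hA : 2 ≤ Fintype.card A)
    (ε₀ ε₁ : ℝ) (h₀ : 0 < ε₀) (h₁ : ε₁ ≥ 5 * ε₀) :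
    ∃ n₀ : ℕ, ∀ n ≥ n₀,
      Real.logb 2 (kprime n (Fintype.card A) ε₀) ≥
        max (Real.logb 2 (kk n)) ((n : ℝ) * binEnt ((rho n : ℝ) / (n : ℝ))) -
          ε₁ * Real.logb 2 (kk n) / Real.logb 2 n := by
  set a := Fintype.card A with ha
  have ha0 : (0 : ℝ) < a := by exact_mod_cast (by omega : 0 < a)
  have ha2 : (2 : ℝ) ≤ a := by exact_mod_cast hA
  -- The first entry makes `2 (log₂ n)² ≤ ε₀ √n`, absorbing the entropy error; the second makes
  -- `2 |A| log₂ n ≤ √n`, which gives `|A| ρ ≤ n`.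
  set δ : ℝ := min (ε₀ / 2) (1 / (2 * a)) with hδ
  have hδ0 : 0 < δ := lt_min (by positivity) (by positivity)
  obtain ⟨n₁, hn₁⟩ := Filter.eventually_atTop.mp (eventually_logb_sq_le hδ0)
  refine ⟨max n₁ (2 * a), fun n hn => ?_⟩
  have hsq := hn₁ n (le_trans (le_max_left _ _) hn)
  have hna : 2 * a ≤ n := le_trans (le_max_right _ _) hn
  have hnaR : 2 * (a : ℝ) ≤ n := by exact_mod_cast hna
  have hn4 : (4 : ℝ) ≤ n := by linarith
  have hn0 : (0 : ℝ) < n := by linarith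
  have hs0 : 0 < Real.sqrt n := Real.sqrt_pos.mpr hn0
  have hss : Real.sqrt n * Real.sqrt n = n := Real.mul_self_sqrt hn0.le
  have hl2 : 2 ≤ Real.logb 2 n := by
    rw [Real.le_logb_iff_rpow_le (by norm_num) hn0]; norm_num; exact_mod_cast hn4
  set l := Real.logb 2 n with hl
  have hll1 : 1 ≤ Real.logb 2 l := by
    rw [Real.le_logb_iff_rpow_le (by norm_num) (by linarith)]; norm_num; exact hl2
  have hll : Real.logb 2 l ≤ l := logb_two_le_self (by linarith)
  have hsqε : l ^ 2 ≤ ε₀ / 2 * Real.sqrt n :=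
    hsq.trans (mul_le_mul_of_nonneg_right (min_le_left _ _) hs0.le)
  have hsqa : l ^ 2 ≤ 1 / (2 * a) * Real.sqrt n :=
    hsq.trans (mul_le_mul_of_nonneg_right (min_le_right _ _) hs0.le)
  have hρs : Real.sqrt n ≤ rho n := by
    refine le_trans ?_ (Nat.le_ceil _)
    nlinarith
  have hρu : (rho n : ℝ) ≤ Real.sqrt n * l + 1 := by
    have h : (rho n : ℝ) < Real.sqrt n * Real.logb 2 l + 1 :=
      Nat.ceil_lt_add_one (by positivity)
    nlinarith
  have hρpos : 0 < rho n := by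
    have : (0 : ℝ) < rho n := lt_of_lt_of_le hs0 hρs
    exact_mod_cast this
  have haρR : (a : ℝ) * rho n ≤ n := by
    have h1 : 2 * a * l ≤ Real.sqrt n := by
      have h : 2 * a * l ^ 2 ≤ Real.sqrt n := by
        calc 2 * a * l ^ 2 ≤ 2 * a * (1 / (2 * a) * Real.sqrt n) := by gcongr
          _ = Real.sqrt n := by field_simp
      refine le_trans ?_ h
      gcongr
      nlinarith
    have h2 : 2 * a * l * Real.sqrt n ≤ n := by
      calc 2 * a * l * Real.sqrt n ≤ Real.sqrt n * Real.sqrt n := by gcongr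
        _ = n := hss
    nlinarith
  have haρ : a * rho n ≤ n := by exact_mod_cast haρR
  have hρn : rho n < n := by nlinarith
  have hchoose := pow_le_choose_of_mul_le (by omega : 1 ≤ a) (rho n) n haρ
  have hk0 : (0 : ℝ) < kk n := by exact_mod_cast Nat.choose_pos hρn.le
  set L := Real.logb 2 (kk n) with hL
  have hLρ : rho n * Real.logb 2 a ≤ L := by
    rw [← Real.logb_pow]
    refine Real.logb_le_logb_of_le (by norm_num) (by positivity) ?_
    unfold kk
    exact_mod_cast hchoose
  have hloga : 1 ≤ Real.logb 2 a := by
    rw [Real.le_logb_iff_rpow_le (by norm_num) ha0]; simpa using ha2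
  have hLs : Real.sqrt n ≤ L := by nlinarith
  have hNcast : (NN n a : ℝ) = kk n * (a : ℝ) ^ rho n := by
    unfold NN kk; push_cast; ring
  have hN0 : (0 : ℝ) < NN n a := by rw [hNcast]; positivity
  set M := Real.logb 2 (NN n a) with hM
  have hMeq : M = L + rho n * Real.logb 2 a := by
    rw [hM, hNcast, Real.logb_mul hk0.ne' (by positivity), Real.logb_pow]
  have hM2 : M ≤ 2 * L := by linarith
  have hMs : Real.sqrt n ≤ M := by
    have : 0 ≤ rho n * Real.logb 2 a := by positivity
    linarith
  have hlogM : l / 2 ≤ Real.logb 2 M := by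
    calc l / 2 = Real.logb 2 (Real.sqrt n) := by
          rw [hl, Real.logb, Real.logb, Real.log_sqrt hn0.le]; ring
      _ ≤ _ := Real.logb_le_logb_of_le (by norm_num) hs0 hMs
  have hkp : Real.logb 2 (kprime n a ε₀) = L - ε₀ / Real.logb 2 M * M := by
    unfold kprime
    rw [Real.logb_mul hk0.ne' (by positivity), Real.logb_rpow_eq_mul_logb_of_pos hN0]
    ring
  have hloss : ε₀ / Real.logb 2 M * M ≤ 4 * ε₀ * (L / l) := by
    calc ε₀ / Real.logb 2 M * M ≤ ε₀ / (l / 2) * (2 * L) := by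
          gcongr
          exact hs0.le.trans hMs
      _ = 4 * ε₀ * (L / l) := by field_simp; ring
  have hent : Real.logb 2 ((n : ℝ) + 1) ≤ ε₀ * (L / l) := by
    have h1 : Real.logb 2 ((n : ℝ) + 1) ≤ 2 * l := by
      calc Real.logb 2 ((n : ℝ) + 1) ≤ Real.logb 2 ((n : ℝ) ^ 2) :=
            Real.logb_le_logb_of_le (by norm_num) (by positivity) (by nlinarith)
        _ = 2 * l := by rw [Real.logb_pow, hl]; norm_num
    refine h1.trans ?_
    rw [← mul_div_assoc, le_div_iff₀ (by linarith)]
    have h2 : ε₀ * Real.sqrt n ≤ ε₀ * L := mul_le_mul_of_nonneg_left hLs h₀.le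
    have h3 : 2 * l * l = 2 * l ^ 2 := by ring
    linarith
  have hH : (n : ℝ) * binEnt ((rho n : ℝ) / n) ≤ L + Real.logb 2 ((n : ℝ) + 1) :=
    mul_binEnt_le hρpos hρn
  have hLl : 0 ≤ L / l := div_nonneg (hs0.le.trans hLs) (by linarith)
  have hmax : max L ((n : ℝ) * binEnt ((rho n : ℝ) / n)) ≤ L + ε₀ * (L / l) :=
    max_le (le_add_of_nonneg_right (mul_nonneg h₀.le hLl)) (by linarith)
  have hε : 5 * ε₀ * (L / l) ≤ ε₁ * (L / l) := mul_le_mul_of_nonneg_right h₁ hLl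
  rw [hkp, mul_div_assoc]
  linarith
end

section
/- There exists an absolute constant C such that for every integer n ≥ 4 and every real υ with |υ| ≤ 1/2: | H((1+υ)/n) − H(1/n) + (υ/n)·log₂(1/n) + (log₂ e)·υ²/(2n) | ≤ C·( 1/n² + |υ|³/n ), where H is the binary entropy function. -/
/-!
Put `x = 1 / n` and measure entropy in nats, so that the entropy of `p` is `-p log p + g p`, where
`g p = -(1 - p) log (1 - p)`. In `H((1 + υ) x) - H(x) + υ x log x + υ² x / 2` the terms containing
`log x` cancel, and what remains is
`-x ((1 + υ) log (1 + υ) - υ - υ² / 2) + (g ((1 + υ) x) - (1 + υ) x) - (g x - x)`.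
The first bracket is `O(|υ|³)` (`abs_one_add_mul_log_sub_le`), and `g p - p = O(p²)` for `p` bounded
away from `1` (`abs_one_sub_mul_log_add_le`). Both follow from the Taylor bound for `log (1 - t)`.
-/

open Classical Finset

/-- The function `-(1 - p) log (1 - p)` agrees with `p` up to `O(p²)`. -/
theorem abs_one_sub_mul_log_add_le {p : ℝ} (h0 : 0 ≤ p) (h1 : p ≤ 1 / 2) :
    |(1 - p) * Real.log (1 - p) + p| ≤ 2 * p ^ 2 := by
  have hp : |p| < 1 := by rw [abs_of_nonneg h0]; linarith
  have h := Real.abs_log_sub_add_sum_range_le hp 1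
  simp only [Finset.sum_range_one, abs_of_nonneg h0] at h
  norm_num at h
  rw [le_div_iff₀ (by linarith), ← abs_of_nonneg (show 0 ≤ 1 - p by linarith), ← abs_mul,
    abs_of_nonneg (show 0 ≤ 1 - p by linarith)] at h
  obtain ⟨h2, h3⟩ := abs_le.mp h
  rw [abs_le]
  constructor <;> nlinarith [sq_nonneg p]

/-- Second-order Taylor bound for `(1 + υ) log (1 + υ)` at `υ = 0`. -/
theorem abs_one_add_mul_log_sub_le {υ : ℝ} (h : |υ| ≤ 1 / 2) :
    |(1 + υ) * Real.log (1 + υ) - υ - υ ^ 2 / 2| ≤ 4 * |υ| ^ 3 := by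
  have hlog := Real.abs_log_sub_add_sum_range_le (x := -υ) (by rw [abs_neg]; linarith) 2
  simp only [Finset.sum_range_succ, Finset.sum_range_zero, abs_neg] at hlog
  norm_num at hlog
  have hR : |-υ + υ ^ 2 / 2 + Real.log (1 + υ)| ≤ 2 * |υ| ^ 3 := by
    refine hlog.trans ?_
    rw [div_le_iff₀ (by linarith)]
    nlinarith [pow_nonneg (abs_nonneg υ) 3]
  have hυ : |1 + υ| ≤ 3 / 2 := by
    obtain ⟨h1, h2⟩ := abs_le.mp h
    rw [abs_le]
    constructor <;> linarith
  have key : (1 + υ) * Real.log (1 + υ) - υ - υ ^ 2 / 2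
      = (1 + υ) * (-υ + υ ^ 2 / 2 + Real.log (1 + υ)) - υ ^ 3 / 2 := by ring
  rw [key]
  calc _ ≤ |(1 + υ) * (-υ + υ ^ 2 / 2 + Real.log (1 + υ))| + |υ ^ 3 / 2| := abs_sub _ _
    _ = |1 + υ| * |-υ + υ ^ 2 / 2 + Real.log (1 + υ)| + |υ| ^ 3 / 2 := by
        rw [abs_mul, abs_div, abs_pow, abs_two]
    _ ≤ 3 / 2 * (2 * |υ| ^ 3) + |υ| ^ 3 / 2 := by gcongr
    _ ≤ 4 * |υ| ^ 3 := by nlinarith [pow_nonneg (abs_nonneg υ) 3]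

/-- Taylor expansion of the binary entropy,
H((1+υ)/n) = H(1/n) − (υ/n)log₂(1/n) − (log₂ e)·υ²/(2n) + O(1/n² + |υ|³/n). -/
theorem statement_5 :
    ∃ C : ℝ, ∀ n : ℕ, 4 ≤ n → ∀ υ : ℝ, |υ| ≤ 1 / 2 →
      |binEnt ((1 + υ) / (n : ℝ)) - binEnt (1 / (n : ℝ)) +
          (υ / (n : ℝ)) * Real.logb 2 (1 / (n : ℝ)) +
          Real.logb 2 (Real.exp 1) * υ ^ 2 / (2 * (n : ℝ))| ≤
        C * (1 / (n : ℝ) ^ 2 + |υ| ^ 3 / (n : ℝ)) := by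
  refine ⟨10 / Real.log 2, fun n hn υ hυ => ?_⟩
  have hn4 : (4 : ℝ) ≤ n := by exact_mod_cast hn
  have hn0 : (0 : ℝ) < n := by linarith
  obtain ⟨x, hx⟩ : ∃ x : ℝ, x = 1 / n := ⟨_, rfl⟩
  have hx0 : 0 < x := by rw [hx]; positivity
  have hx4 : x ≤ 1 / 4 := by rw [hx]; exact one_div_le_one_div_of_le (by norm_num) hn4
  obtain ⟨hυ1, hυ2⟩ := abs_le.mp hυ
  have hl2 : 0 < Real.log 2 := Real.log_pos (by norm_num)
  have hp0 : 0 ≤ (1 + υ) * x := mul_nonneg (by linarith) hx0.le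
  have hp1 : (1 + υ) * x ≤ 3 / 2 * x := by gcongr; linarith
  have hA := abs_one_sub_mul_log_add_le hp0 (by linarith)
  have hB := abs_one_sub_mul_log_add_le hx0.le (by linarith)
  have hC := abs_one_add_mul_log_sub_le hυ
  have hp2 : ((1 + υ) * x) ^ 2 ≤ (3 / 2 * x) ^ 2 := pow_le_pow_left₀ hp0 hp1 2
  have hD : |x * ((1 + υ) * Real.log (1 + υ) - υ - υ ^ 2 / 2)| ≤ x * (4 * |υ| ^ 3) := by
    rw [abs_mul, abs_of_pos hx0]
    gcongr
  have hlogp : Real.log ((1 + υ) * x) = Real.log (1 + υ) + Real.log x :=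
    Real.log_mul (by linarith) hx0.ne'
  -- The entropy expression in nats, with the `log x` terms cancelled.
  have key : binEnt ((1 + υ) / (n : ℝ)) - binEnt (1 / (n : ℝ)) +
          (υ / (n : ℝ)) * Real.logb 2 (1 / (n : ℝ)) +
          Real.logb 2 (Real.exp 1) * υ ^ 2 / (2 * (n : ℝ)) =
      (-(x * ((1 + υ) * Real.log (1 + υ) - υ - υ ^ 2 / 2))
        - ((1 - (1 + υ) * x) * Real.log (1 - (1 + υ) * x) + (1 + υ) * x)
        + ((1 - x) * Real.log (1 - x) + x)) / Real.log 2 := by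
    have e1 : (1 + υ) / (n : ℝ) = (1 + υ) * x := by rw [hx]; ring
    have e2 : υ / (n : ℝ) = υ * x := by rw [hx]; ring
    have e3 : Real.logb 2 (Real.exp 1) * υ ^ 2 / (2 * (n : ℝ))
        = Real.logb 2 (Real.exp 1) * υ ^ 2 / 2 * x := by rw [hx]; field_simp
    rw [e1, e2, e3, ← hx]
    simp only [binEnt, Real.logb, Real.log_exp, hlogp]
    field_simp
    ring
  have e4 : 10 / Real.log 2 * (1 / (n : ℝ) ^ 2 + |υ| ^ 3 / (n : ℝ))
      = (10 * (x ^ 2 + |υ| ^ 3 * x)) / Real.log 2 := by rw [hx]; ring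
  rw [key, e4, abs_div, abs_of_pos hl2]
  gcongr
  have hv : 0 ≤ x * |υ| ^ 3 := by positivity
  obtain ⟨a1, a2⟩ := abs_le.mp hA
  obtain ⟨b1, b2⟩ := abs_le.mp hB
  obtain ⟨d1, d2⟩ := abs_le.mp hD
  rw [abs_le]
  constructor <;> nlinarith [sq_nonneg x]
end

section
/- Let ε₂ ∈ (0, 0.2) and ε₃ > 0 be constants, δ = ( ε₂ / |A|^{2/ε₂} )⁴, and suppose ε₁ ≥ 4ε₂·log₂|A| + 8ε₃. In the setup, if den(S) > 1 − δ, then for every good index i: Σ_{good w_{i−1}} Pr[w_{i−1}]·β_i(w_{i−1}) ≥ β_i / 4. -/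
/-!
Let `p` be the distribution of the prefix `W_{i-1}` and `μ(w) = p(w) q_i(w) / q_i` its distribution
conditioned on `X_i = 1`. Since `Y_i` is constant when `X_i = 0`, `β_i(w) ≤ q_i(w) log |A|`
(`betaW_le`), so prefixes of small `μ`-mass contribute little to `β_i = ∑ p(w) β_i(w)`.

Goodness of the index bounds the mutual information of `X_i` and `W_{i-1}` by `2 q_i log |A|`, hence
the divergence of `μ` from `p` by `2 log |A|`. By the Donsker–Varadhan variational inequality, any
event with `p`-mass at most `√δ` then has `μ`-mass at most `ε₂` (`mass_le_of_entropy`).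

This is used twice. The prefix graph inherits density above `1 - δ` (`nonNbr_le`), so by Markov's
inequality (`markov_fiber`) the prefixes whose non-neighbourhood has `p`-mass above `√δ` form a set
of `p`-mass at most `√δ`, hence of `μ`-mass at most `ε₂`. For every other prefix the
non-neighbourhood itself has `μ`-mass at most `ε₂`, which is the neighbourhood condition in the
definition of a good prefix. The exceptional prefixes contribute at most `ε₂ q_i log |A|` to `β_i`,
and those with `β_i(w) < ε₃ q_i(w)` at most `ε₃ q_i`; together this is at most `β_i / 2`, by the
lower bounds on `β_i` and `ε₁`.
-/

open Classical Finset

/-! ### Change of measure under an entropy bound -/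

open Real in
theorem negMulLog_le_tangent {x z : ℝ} (hx : 0 ≤ x) (hz : 0 < z) :
    negMulLog x ≤ -x * log z + z - x := by
  rcases hx.eq_or_lt with rfl | hx
  · simp [hz.le]
  · have h := log_le_sub_one_of_pos (div_pos hz hx)
    rw [log_div hz.ne' hx.ne'] at h
    have h2 := mul_le_mul_of_nonneg_left h hx.le
    have h3 : x * (z / x - 1) = z - x := by field_simp
    rw [h3] at h2
    unfold negMulLog
    linarith

open Real in
/-- Let `X` be a Bernoulli variable with `Pr[X = 1 | w] = x w` over a prior `p`, and suppose that
the mutual information of `X` and `w` is at most `2 q log a`, where `q = Pr[X = 1]`. Then an event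
of small enough prior probability has probability at most `ε` conditionally on `X = 1`. -/
theorem mass_le_of_entropy {ι : Type*} [Fintype ι] (p x : ι → ℝ) (E : ι → Prop)
    (q a ε : ℝ) (hp : ∀ w, 0 ≤ p w) (hp1 : ∑ w, p w = 1)
    (hx : ∀ w, 0 ≤ x w) (hx1 : ∀ w, x w ≤ 1) (hq : ∑ w, p w * x w = q) (hq0 : 0 < q)
    (ha : 2 ≤ a) (hε : 0 < ε) (hε1 : ε < 1)
    (hent : negMulLog q + negMulLog (1 - q) - 2 * q * log a
      ≤ ∑ w, p w * (negMulLog (x w) + negMulLog (1 - x w)))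
    (hE : (∑ w, if E w then p w else 0) ≤ (ε / a ^ (2 / ε)) ^ 2) :
    (∑ w, if E w then p w * x w else 0) ≤ ε * q := by
  have ha0 : 0 < a := by linarith
  set c : ℝ := 4 / ε * log a with hc
  set m : ℝ := ∑ w, if E w then p w * x w else 0 with hm
  -- Concavity, rather than a tangent line at `1 - q`, also covers the degenerate case `q = 1`.
  have h0 : ∑ w, p w * negMulLog (1 - x w) ≤ negMulLog (1 - q) := by
    have h := concaveOn_negMulLog.le_map_sum (t := Finset.univ) (w := p) (p := fun w => 1 - x w)
      (fun w _ => hp w) hp1 (fun w _ => by simpa using hx1 w)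
    have h2 : ∑ w, p w • (1 - x w) = 1 - q := by
      simp only [smul_eq_mul, mul_sub, mul_one, Finset.sum_sub_distrib, hp1, hq]
    rw [h2] at h
    simpa using h
  -- Tangent points `q * exp (c 1_E) / 2`, as in the Donsker–Varadhan inequality;
  -- the normalising sum is at most `2` because `exp c * p(E) ≤ 1`.
  have h1 : ∀ w, p w * negMulLog (x w) ≤
      p w * x w * (-log q + log 2 - 1) - c * (if E w then p w * x w else 0)
        + q / 2 * (p w + exp c * (if E w then p w else 0)) := by
    intro w
    by_cases h : E w
    · have := negMulLog_le_tangent (hx w) (z := q * exp c / 2) (by positivity)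
      rw [log_div (by positivity) (by norm_num), log_mul hq0.ne' (exp_pos c).ne', log_exp] at this
      have h2 := mul_le_mul_of_nonneg_left this (hp w)
      have h3 : 0 ≤ q / 2 * p w := by have := hp w; positivity
      simp only [h, if_true]
      nlinarith
    · have := negMulLog_le_tangent (hx w) (z := q / 2) (by positivity)
      rw [log_div (by positivity) (by norm_num)] at this
      have h2 := mul_le_mul_of_nonneg_left this (hp w)
      simp only [h, if_false]
      nlinarith
  have h1s := Finset.sum_le_sum (fun w (_ : w ∈ Finset.univ) => h1 w)
  rw [Finset.sum_add_distrib, Finset.sum_sub_distrib, ← Finset.sum_mul, ← Finset.mul_sum,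
    ← Finset.mul_sum, Finset.sum_add_distrib, ← Finset.mul_sum, hq, hp1, ← hm] at h1s
  have hexp : exp c * (∑ w, if E w then p w else 0) ≤ 1 := by
    have e1 : exp c = (a ^ (2 / ε)) ^ 2 := by
      rw [← rpow_natCast, ← rpow_mul ha0.le, rpow_def_of_pos ha0, hc]
      congr 1; push_cast; ring
    have hpos : 0 < a ^ (2 / ε) := rpow_pos_of_pos ha0 _
    calc _ ≤ exp c * (ε / a ^ (2 / ε)) ^ 2 := mul_le_mul_of_nonneg_left hE (exp_pos c).le
      _ = ε ^ 2 := by rw [e1]; field_simp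
      _ ≤ 1 := by nlinarith
  have hexp2 := mul_le_mul_of_nonneg_left hexp (by positivity : 0 ≤ q / 2)
  simp only [mul_add, Finset.sum_add_distrib] at hent
  have hnq : negMulLog q = -q * log q := rfl
  have hkey : c * m ≤ 2 * q * log a + q * log 2 := by
    rw [hnq] at hent
    nlinarith
  have hla : log 2 ≤ log a := log_le_log (by norm_num) ha
  have hla0 : 0 < log a := log_pos (by linarith)
  have h4 : 4 * log a * m ≤ 4 * log a * (ε * q) := by
    have : ε * (c * m) = 4 * log a * m := by rw [hc]; field_simp
    rw [← this]
    have h5 := mul_le_mul_of_nonneg_left hkey hε.le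
    have h6 : 0 ≤ ε * q * (log a - log 2) := by
      have : 0 ≤ log a - log 2 := by linarith
      positivity
    have h7 : 0 ≤ ε * q * log a := by positivity
    nlinarith
  exact le_of_mul_le_mul_left h4 (by positivity)

theorem neg_mul_logb_eq (x : ℝ) : -(x * Real.logb 2 x) = Real.negMulLog x / Real.log 2 := by
  unfold Real.negMulLog Real.logb; ring

/-! ### Probability and entropy under a uniform distribution -/

section prob

variable {V B C : Type*}

theorem prS_nonneg (S : Finset V) (P : V → Prop) : 0 ≤ prS S P := by
  unfold prS; positivity

theorem prS_le_one (S : Finset V) (P : V → Prop) : prS S P ≤ 1 :=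
  div_le_one_of_le₀ (by exact_mod_cast Finset.card_filter_le _ _) (by positivity)

theorem sum_prS_fiber [Fintype C] (S : Finset V) (g : V → C) (φ : C → ℝ) :
    ∑ c, prS S (fun v => g v = c) * φ c = (∑ v ∈ S, φ (g v)) / S.card := by
  rw [← Finset.sum_fiberwise S g (fun v => φ (g v)), Finset.sum_div]
  refine Finset.sum_congr rfl fun c _ => ?_
  rw [Finset.sum_congr rfl (g := fun _ => φ c)
    (fun v hv => by rw [(Finset.mem_filter.1 hv).2]), Finset.sum_const, nsmul_eq_mul]
  unfold prS
  rw [div_mul_eq_mul_div]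

theorem sum_prS_eq_one [Fintype C] (S : Finset V) (hS : S.Nonempty) (g : V → C) :
    ∑ c, prS S (fun v => g v = c) = 1 := by
  have h := sum_prS_fiber S g (fun _ => 1)
  have : (S.card : ℝ) ≠ 0 := by exact_mod_cast hS.card_pos.ne'
  simpa [this] using h

/-- Chain rule for probabilities, valid also when `P` has probability zero. -/
theorem prS_mul_prS_filter (S : Finset V) (P Q : V → Prop) :
    prS S P * prS (S.filter P) Q = prS S (fun v => P v ∧ Q v) := by
  unfold prS
  rw [Finset.filter_filter]
  rcases Nat.eq_zero_or_pos (S.filter P).card with h | h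
  · have h2 : (S.filter fun v => P v ∧ Q v).card = 0 := by
      rw [Finset.card_eq_zero, Finset.filter_eq_empty_iff] at *
      exact fun v hv hh => h hv hh.1
    rw [h, Nat.cast_zero, zero_div, zero_mul, eq_comm, div_eq_zero_iff]
    left
    rw [Nat.cast_eq_zero]
    convert h2
  · have : ((S.filter P).card : ℝ) ≠ 0 := by exact_mod_cast h.ne'
    rw [div_mul_div_comm, mul_comm, mul_div_mul_right _ _ this]
    congr!

theorem sum_prS_and [Fintype C] (S : Finset V) (g : V → C) (Q : V → Prop) :
    ∑ c, prS S (fun v => g v = c ∧ Q v) = prS S Q := by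
  unfold prS
  rw [← Finset.sum_div, Finset.card_eq_sum_card_fiberwise (s := S.filter Q) (f := g)
    (t := (Finset.univ : Finset C)) (by simp)]
  push_cast
  congr 1
  refine Finset.sum_congr rfl fun c _ => ?_
  rw [Finset.filter_filter]
  congr 3
  ext v; exact and_comm

theorem fEnt_eq [Fintype B] (S : Finset V) (f : V → B) :
    fEnt S f = (∑ b, Real.negMulLog (prS S fun v => f v = b)) / Real.log 2 := by
  unfold fEnt
  rw [Finset.sum_div]
  exact Finset.sum_congr rfl fun b _ => neg_mul_logb_eq _

theorem fEnt_nonneg [Fintype B] (S : Finset V) (f : V → B) : 0 ≤ fEnt S f := by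
  rw [fEnt_eq]
  exact div_nonneg (Finset.sum_nonneg fun b _ =>
    Real.negMulLog_nonneg (prS_nonneg _ _) (prS_le_one _ _)) (Real.log_nonneg (by norm_num))

theorem fEnt_le [Fintype B] [Nonempty B] (S : Finset V) (f : V → B) :
    fEnt S f ≤ Real.logb 2 (Fintype.card B) := by
  have hl : 0 < Real.log 2 := Real.log_pos (by norm_num)
  have hB : (0 : ℝ) < Fintype.card B := by exact_mod_cast Fintype.card_pos
  rw [fEnt_eq, Real.logb]
  refine div_le_div_of_nonneg_right ?_ hl.le
  rcases S.eq_empty_or_nonempty with rfl | hS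
  · simp only [prS, Finset.filter_empty, Finset.card_empty, Nat.cast_zero, div_zero,
      Real.negMulLog_zero, Finset.sum_const_zero]
    exact Real.log_natCast_nonneg _
  · have h := Finset.sum_le_sum (fun b (_ : b ∈ Finset.univ) =>
      negMulLog_le_tangent (prS_nonneg S fun v => f v = b) (inv_pos.2 hB))
    rw [Finset.sum_sub_distrib, Finset.sum_add_distrib, ← Finset.sum_mul, Finset.sum_neg_distrib,
      sum_prS_eq_one S hS, Real.log_inv] at h
    simp only [Finset.sum_const, Finset.card_univ, nsmul_eq_mul, mul_inv_cancel₀ hB.ne'] at h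
    linarith

theorem fEnt_eq_zero_of_const [Fintype B] (S : Finset V) (f : V → B) (b₀ : B)
    (h : ∀ v ∈ S, f v = b₀) : fEnt S f = 0 := by
  rw [fEnt_eq]
  refine div_eq_zero_iff.2 (Or.inl (Finset.sum_eq_zero fun b _ => ?_))
  unfold prS
  by_cases hb : b = b₀
  · rw [Finset.filter_true_of_mem (fun v hv => by rw [h v hv, hb])]
    rcases Nat.eq_zero_or_pos S.card with h0 | h0
    · simp [h0]
    · rw [div_self (by exact_mod_cast h0.ne')]; simp
  · rw [Finset.filter_false_of_mem (fun v hv hh => hb (hh.symm.trans (h v hv)))]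
    simp

/-- Nonemptiness is needed: on the empty set all probabilities are `0 / 0 = 0`. -/
theorem fEnt_bool (S : Finset V) (hS : S.Nonempty) (f : V → Bool) :
    fEnt S f = (Real.negMulLog (prS S fun v => f v = true)
      + Real.negMulLog (1 - prS S fun v => f v = true)) / Real.log 2 := by
  have h := sum_prS_eq_one S hS f
  rw [Fintype.sum_bool] at h
  rw [fEnt_eq, Fintype.sum_bool, ← h]
  congr 3
  ring

theorem cEnt_bool_le [Fintype B] [Nonempty B] (S : Finset V) (f : V → B) (g : V → Bool) (b₀ : B)
    (h : ∀ v ∈ S, g v = false → f v = b₀) :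
    cEnt S f g ≤ prS S (fun v => g v = true) * Real.logb 2 (Fintype.card B) := by
  unfold cEnt
  rw [Fintype.sum_bool]
  refine le_trans (add_le_add (mul_le_mul_of_nonneg_left (fEnt_le _ _) (by positivity))
    (le_of_eq (mul_eq_zero_of_right _ (fEnt_eq_zero_of_const _ _ b₀ fun v hv => ?_))))
    (le_of_eq ?_)
  · simp only [Finset.mem_filter] at hv
    exact h v hv.1 hv.2
  · rw [add_zero]
    unfold prS
    congr!

/-- Markov's inequality: if the pairs satisfying `R` have `p × p`-mass at most `s ^ 2`, the points
whose `R`-section has mass above `s` have total mass at most `s`. -/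
theorem markov_fiber {ι : Type*} [Fintype ι] (p : ι → ℝ) (hp : ∀ w, 0 ≤ p w)
    (R : ι → ι → Prop) (s : ℝ) (hs : 0 < s)
    (h : (∑ w, p w * ∑ σ, if R w σ then p σ else 0) ≤ s ^ 2) :
    (∑ w, if s < (∑ σ, if R w σ then p σ else 0) then p w else 0) ≤ s := by
  refine le_of_mul_le_mul_left ?_ hs
  rw [← pow_two]
  refine le_trans ?_ h
  rw [Finset.mul_sum]
  refine Finset.sum_le_sum fun w _ => ?_
  have h0 : 0 ≤ ∑ σ, if R w σ then p σ else 0 :=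
    Finset.sum_nonneg fun σ _ => by split_ifs <;> simp [hp]
  split_ifs with hw
  · nlinarith [hp w]
  · simpa using mul_nonneg (hp w) h0

end prob

/-! ### Prefixes of product-graph vertices -/

section main

variable {n ρ : ℕ} {A : Type*} [Fintype A] [DecidableEq A]

theorem qiW_eq (a₀ : A) (S : Finset (Vtx n ρ A)) (i : Fin n) (w : Pfx n A) :
    qiW a₀ S i w = prS (S.filter fun v => Wp a₀ i v = w) (fun v => Xb v i = true) := by
  unfold qiW; congr!

theorem sum_prW_mul_qiW (a₀ : A) (S : Finset (Vtx n ρ A)) (i : Fin n) :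
    ∑ w, prW a₀ S i w * qiW a₀ S i w = qi S i := by
  unfold qi
  rw [← sum_prS_and S (Wp a₀ i)]
  refine Finset.sum_congr rfl fun w _ => ?_
  rw [← prS_mul_prS_filter]
  unfold prW qiW
  congr!

theorem betaE_eq (a₀ : A) (S : Finset (Vtx n ρ A)) (i : Fin n) :
    betaE a₀ S i = ∑ w, prW a₀ S i w * betaW a₀ S i w := by
  unfold betaE cEnt
  rw [Fintype.sum_prod_type]
  refine Finset.sum_congr rfl fun w _ => ?_
  unfold betaW cEnt
  rw [Finset.mul_sum]
  refine Finset.sum_congr rfl fun b _ => ?_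
  have h := prS_mul_prS_filter S (fun v => Wp a₀ i v = w) (fun v => Xb v i = b)
  unfold prS at h
  rw [← mul_assoc]
  simp only [Prod.mk.injEq, Finset.filter_filter] at h ⊢
  unfold prW prS
  convert congrArg (fun t => t * fEnt (S.filter fun v => Wp a₀ i v = w ∧ Xb v i = b)
    (fun v => Yv a₀ v i)) h.symm using 2 <;> congr!

theorem betaW_nonneg (a₀ : A) (S : Finset (Vtx n ρ A)) (i : Fin n) (w : Pfx n A) :
    0 ≤ betaW a₀ S i w := by
  unfold betaW cEnt
  exact Finset.sum_nonneg fun _ _ => mul_nonneg (by positivity) (fEnt_nonneg _ _)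

/-- `Y_i` is deterministic when `X_i = 0`, so its entropy only comes from `X_i = 1`. -/
theorem betaW_le (a₀ : A) (S : Finset (Vtx n ρ A)) (i : Fin n) (w : Pfx n A) :
    betaW a₀ S i w ≤ qiW a₀ S i w * Real.logb 2 (Fintype.card A) := by
  have : Nonempty A := ⟨a₀⟩
  unfold betaW
  refine (cEnt_bool_le _ _ _ a₀ fun v _ hv => ?_).trans (le_of_eq ?_)
  · simp only [Xb, decide_eq_false_iff_not] at hv
    simp [Yv, hv]
  · rw [qiW_eq]

theorem alphaE_eq (a₀ : A) (S : Finset (Vtx n ρ A)) (i : Fin n) :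
    alphaE a₀ S i = (∑ w, prW a₀ S i w * (Real.negMulLog (qiW a₀ S i w)
      + Real.negMulLog (1 - qiW a₀ S i w))) / Real.log 2 := by
  unfold alphaE cEnt
  rw [Finset.sum_div]
  refine Finset.sum_congr rfl fun w _ => ?_
  rw [qiW_eq]
  unfold prW
  rw [mul_div_assoc]
  rcases (S.filter fun v => Wp a₀ i v = w).eq_empty_or_nonempty with h | h
  · have h1 : prS S (fun v => Wp a₀ i v = w) = 0 := by
      unfold prS
      rw [div_eq_zero_iff]
      left
      rw [Nat.cast_eq_zero, Finset.card_eq_zero, ← h]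
      congr!
    rw [h1, zero_mul, mul_eq_zero]
    left
    exact h1
  · rw [← fEnt_bool _ h]
    unfold prS
    congr!

/-- Adjacent vertices have neighbouring prefixes, so the prefix graph inherits the density. -/
theorem nonNbr_le (ψ : CSP n A) (a₀ : A) (S : Finset (Vtx n ρ A)) (hS : S.Nonempty) (i : ℕ) :
    (∑ w, prW a₀ S i w * ∑ σ, if ¬ PfxNbr n A i w σ then prW a₀ S i σ else 0)
      ≤ 1 - den ψ S := by
  have hc : (0 : ℝ) < S.card := by exact_mod_cast hS.card_pos
  have h1 : ∀ w, (∑ σ, if ¬ PfxNbr n A i w σ then prW a₀ S i σ else 0)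
      = (∑ v ∈ S, if ¬ PfxNbr n A i w (Wp a₀ i v) then (1 : ℝ) else 0) / S.card := by
    intro w
    rw [← sum_prS_fiber S (Wp a₀ i) (fun σ => if ¬ PfxNbr n A i w σ then (1 : ℝ) else 0)]
    refine Finset.sum_congr rfl fun σ _ => ?_
    unfold prW
    split_ifs <;> simp
  simp only [h1]
  unfold prW
  rw [sum_prS_fiber S (Wp a₀ i) (fun w =>
    (∑ v ∈ S, if ¬ PfxNbr n A i w (Wp a₀ i v) then (1 : ℝ) else 0) / S.card)]
  rw [← Finset.sum_div, div_div, ← pow_two, le_sub_iff_add_le]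
  unfold den
  rw [← add_div, div_le_one (by positivity), ← Finset.sum_product', pow_two, ← Nat.cast_mul,
    ← Finset.card_product, Finset.card_filter, Nat.cast_sum, ← Finset.sum_add_distrib,
    Finset.card_eq_sum_ones, Nat.cast_sum]
  refine Finset.sum_le_sum fun x _ => ?_
  by_cases h : PAdj ψ x.1 x.2
  · have : PfxNbr n A i (Wp a₀ i x.1) (Wp a₀ i x.2) := by
      intro j hj h1 h2
      simp only [Wp, hj, if_true, Xb, decide_eq_true_eq] at h1 h2
      simp only [Wp, hj, if_true, Yv, h1, h2, dif_pos]
      exact h.2.2.1 j h1 h2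
    simp [h, this]
  · simp only [h, if_false, Nat.cast_zero, add_zero, Nat.cast_one]
    split_ifs <;> norm_num

end main

/-- Claim 3.2: if den(S) > 1 − δ then for every good index i the good
prefixes carry at least a quarter of β_i:
Σ_{good w} Pr[w]·β_i(w) ≥ β_i/4. -/
theorem statement_8 (n : ℕ) (A : Type) [Fintype A] [DecidableEq A]
    (hA : 2 ≤ Fintype.card A) (ε₀ ε₁ ε₂ ε₃ δ : ℝ)
    (hε₀ : 0 < ε₀) (hε₂ : 0 < ε₂ ∧ ε₂ < 0.2) (hε₃ : 0 < ε₃)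
    (hδ : δ = (ε₂ / (Fintype.card A : ℝ) ^ (2 / ε₂)) ^ 4)
    (hε₁ : ε₁ ≥ 4 * ε₂ * Real.logb 2 (Fintype.card A) + 8 * ε₃)
    (ψ : CSP n A) (a₀ : A) (S : Finset (Vtx n (rho n) A))
    (hS : S.card = ⌊kprime n (Fintype.card A) ε₀⌋₊)
    (hden : den ψ S > 1 - δ) :
    ∀ i : Fin n, GoodIdx a₀ S ε₁ i →
      (∑ w : Pfx n A,
          if GoodPfx a₀ S ε₁ ε₂ ε₃ i w then prW a₀ S (i : ℕ) w * betaW a₀ S i w else 0)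
        ≥ betaE a₀ S i / 4 := by
  intro i hi
  obtain ⟨hε₂0, hε₂1⟩ := hε₂
  have ha : (2 : ℝ) ≤ Fintype.card A := by exact_mod_cast hA
  set a : ℝ := (Fintype.card A : ℝ) with ha_def
  set s : ℝ := (ε₂ / a ^ (2 / ε₂)) ^ 2 with hs_def
  have hapos : 0 < a ^ (2 / ε₂) := Real.rpow_pos_of_pos (by linarith) _
  have hs : 0 < s := by positivity
  have hδs : δ = s ^ 2 := by rw [hδ, hs_def]; ring
  have hl2 : 0 < Real.log 2 := Real.log_pos (by norm_num)
  have hL : 0 < Real.logb 2 a := Real.logb_pos (by norm_num) (by linarith)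
  -- The empty set has junk density `0 / 0 = 0`, which is below `1 - δ`.
  have hne : S.Nonempty := by
    rw [Finset.nonempty_iff_ne_empty]
    rintro rfl
    have h1 : ε₂ / a ^ (2 / ε₂) ≤ 1 := by
      rw [div_le_one hapos]
      have := Real.one_le_rpow (by linarith : (1 : ℝ) ≤ a) (by positivity : 0 ≤ 2 / ε₂)
      linarith
    have h2 : δ ≤ 1 := by rw [hδ]; exact pow_le_one₀ (by positivity) h1
    simp [den] at hden
    linarith
  set p : Pfx n A → ℝ := prW a₀ S (i : ℕ) with hp_def
  set x : Pfx n A → ℝ := qiW a₀ S i with hx_def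
  set q : ℝ := qi S i with hq_def
  have hp : ∀ w, 0 ≤ p w := fun w => prS_nonneg _ _
  have hx : ∀ w, 0 ≤ x w := fun w => prS_nonneg _ _
  have hx1 : ∀ w, x w ≤ 1 := fun w => prS_le_one _ _
  have hp1 : ∑ w, p w = 1 := sum_prS_eq_one S hne _
  have hpx : ∑ w, p w * x w = q := sum_prW_mul_qiW a₀ S i
  have hq : 0 ≤ q := prS_nonneg _ _
  have hβ : betaE a₀ S i = ∑ w, p w * betaW a₀ S i w := betaE_eq a₀ S i
  -- Mass transfer from the prefix distribution to its conditioning on `X_i = 1`.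
  have hmass : ∀ E : Pfx n A → Prop, (∑ w, if E w then p w else 0) ≤ s →
      (∑ w, if E w then p w * x w else 0) ≤ ε₂ * q := by
    intro E hE
    rcases hq.eq_or_lt with h0 | h0
    · have hz : ∑ w, p w * x w = 0 := hpx.trans h0.symm
      rw [← h0, mul_zero]
      refine le_trans ?_ hz.le
      refine Finset.sum_le_sum fun w _ => ?_
      split_ifs
      · exact le_rfl
      · exact mul_nonneg (hp w) (hx w)
    · refine mass_le_of_entropy p x E q a ε₂ hp hp1 hx hx1 hpx h0 ha hε₂0 (by linarith) ?_ hE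
      have h1 := hi.1
      rw [alphaE_eq, ge_iff_le, le_div_iff₀ hl2] at h1
      refine le_trans (le_of_eq ?_) h1
      have e1 := neg_mul_logb_eq q
      have e2 := neg_mul_logb_eq (1 - q)
      rw [eq_div_iff hl2.ne'] at e1 e2
      rw [← e1, ← e2, ← (by unfold Real.logb; field_simp : Real.logb 2 a * Real.log 2 = Real.log a)]
      unfold binEnt
      ring
  obtain ⟨R, hR⟩ : ∃ R : Pfx n A → Pfx n A → Prop, R = fun w σ => ¬ PfxNbr n A (i : ℕ) w σ := ⟨_, rfl⟩
  obtain ⟨Bad, hBadDef⟩ : ∃ Bad : Pfx n A → Prop,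
      ∀ w, Bad w ↔ s < ∑ σ, if R w σ then p σ else 0 := ⟨_, fun _ => Iff.rfl⟩
  have hBad : (∑ w, if Bad w then p w * x w else 0) ≤ ε₂ * q := by
    have hR2 : (∑ w, p w * ∑ σ, if R w σ then p σ else 0) ≤ s ^ 2 := by
      have h := nonNbr_le ψ a₀ S hne (i : ℕ)
      rw [← hδs]
      refine le_trans (le_of_eq ?_) (h.trans (by linarith))
      subst hR
      congr!
    have h := markov_fiber p hp R s hs hR2
    refine hmass Bad (le_trans (le_of_eq ?_) h)
    exact Finset.sum_congr rfl fun w _ => by simp only [hBadDef]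
  have hgood : ∀ w, ¬ Bad w → ε₃ * x w ≤ betaW a₀ S i w → GoodPfx a₀ S ε₁ ε₂ ε₃ i w := by
    intro w hw hb
    refine ⟨hi, ?_, hb⟩
    have h1 := hmass (R w) (not_lt.1 fun h => hw ((hBadDef w).2 h))
    have h2 : (∑ σ, if PfxNbr n A (i : ℕ) w σ then p σ * x σ else 0)
        + (∑ σ, if R w σ then p σ * x σ else 0) = q := by
      rw [← hpx, ← Finset.sum_add_distrib]
      refine Finset.sum_congr rfl fun σ _ => ?_
      by_cases h : PfxNbr n A (i : ℕ) w σ <;> simp [hR, h]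
    change (1 - ε₂) * q ≤ ∑ σ, if PfxNbr n A (i : ℕ) w σ then p σ * x σ else 0
    linarith [h1, h2]
  -- A prefix that is not good is either in `Bad` or has `β_i(w) < ε₃ q_i(w)`.
  have hpt : ∀ w, p w * betaW a₀ S i w ≤
      (if GoodPfx a₀ S ε₁ ε₂ ε₃ i w then p w * betaW a₀ S i w else 0)
        + Real.logb 2 a * (if Bad w then p w * x w else 0) + ε₃ * (p w * x w) := by
    intro w
    have hpw := hp w
    have hxw := hx w
    have t3 : 0 ≤ ε₃ * (p w * x w) := by positivity
    have t2 : 0 ≤ Real.logb 2 a * (if Bad w then p w * x w else 0) := by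
      split_ifs <;> positivity
    by_cases hg : GoodPfx a₀ S ε₁ ε₂ ε₃ i w
    · rw [if_pos hg]; linarith
    · rw [if_neg hg]
      by_cases hb : Bad w
      · rw [if_pos hb]
        have := mul_le_mul_of_nonneg_left (betaW_le a₀ S i w) hpw
        change p w * betaW a₀ S i w ≤ p w * (x w * Real.logb 2 a) at this
        linarith
      · have h1 : betaW a₀ S i w ≤ ε₃ * x w := by
          by_contra hcon
          exact hg (hgood w hb (not_le.1 hcon).le)
        have := mul_le_mul_of_nonneg_left h1 hpw
        linarith
  have hsum := Finset.sum_le_sum (fun w (_ : w ∈ Finset.univ) => hpt w)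
  rw [← hβ, Finset.sum_add_distrib, Finset.sum_add_distrib, ← Finset.mul_sum, ← Finset.mul_sum,
    hpx] at hsum
  have hb1 := mul_le_mul_of_nonneg_left hBad hL.le
  have hb2 : (1 / 2) * ε₁ * q ≤ betaE a₀ S i := hi.2
  have hb3 := mul_le_mul_of_nonneg_right hε₁ hq
  have hb4 : 0 ≤ betaE a₀ S i := by
    rw [hβ]
    exact Finset.sum_nonneg fun w _ => mul_nonneg (hp w) (betaW_nonneg _ _ _ _)
  have hb5 : 0 ≤ ε₃ * q := by positivity
  rw [ge_iff_le]
  nlinarith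
end
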